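/- In the correlated Erdős–Rényi detection problem, if the parameter sequences p_n ∈ (0,1) and s_n ∈ [0,1] satisfy s_n² ≥ 2·log n / ((n−1)·p_n·(log(1/p_n) − 1 + p_n)) for all sufficiently large n, then the total variation distance TV(P_{n,p_n,s_n}, Q_{n,p_n,s_n}) → 1 as n → ∞; in particular strong detection is possible. -/

import Mathlib

/-!
The test rejects the null model when the maximal overlap `max_π ∑_e A_e B_{π(e)}` is at least
`τ = (1 - δ) m`, where `m = (n choose 2) p s²` is the mean overlap at the true permutation in the
planted model. Write `L = log (1/p)` and `g = L - 1 + p`; the hypothesis says `m g ≥ n log n`.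

*False alarms.* Under the null model the overlap at a fixed permutation is
`Bin((n choose 2), p² s²)`. The Chernoff bound with parameter `L`, for which `exp L = 1/p`, has
exponent `-m g + δ L m`, and a union bound over permutations costs `n!`
(`QER_rejectSet_le`). Since `n! ≤ 2 (n/2)^n` there is room for a loss of `n/2` against
`-n log n`, and `δ = g / (2 L log n)` uses exactly that.

*Missed detection.* In the planted model the overlap at the true permutation is
`Bin((n choose 2), p s²)`, so it falls below `(1 - δ) m` with probability at most
`exp (-m δ² / 4)` (`PER_rejectSet_ge`). The condition `s ≤ 1` forces `L ≤ 2 log n`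
(`log_inv_le`), hence `L² ≤ 4 g log n` (`sq_le_mul_exponent`) and
`m δ² ≥ n / (16 log² n) → ∞`.

`TV_lower_bound` combines the two error bounds, and both error terms tend to zero.
-/

open MeasureTheory ProbabilityTheory Filter

noncomputable section

/-- The set of potential edges on `n` vertices: unordered pairs of distinct elements of `Fin n`. -/
abbrev Edge (n : ℕ) := {e : Sym2 (Fin n) // ¬ e.IsDiag}

instance (n : ℕ) : MeasurableSpace (Equiv.Perm (Fin n)) := ⊤

/-- The uniform distribution on permutations of `[n]`. -/
def permUniform (n : ℕ) : Measure (Equiv.Perm (Fin n)) :=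
  (PMF.uniformOfFintype (Equiv.Perm (Fin n))).toMeasure

/-- The action of a node permutation on edges, `π({i,j}) = {π(i), π(j)}`. -/
def edgeMap {n : ℕ} (π : Equiv.Perm (Fin n)) (e : Edge n) : Edge n :=
  ⟨Sym2.map π e.1, fun h => e.2 ((Sym2.isDiag_map π.injective).mp h)⟩

/-- The Bernoulli(p) distribution on `Bool` (a probability measure when `p ∈ [0,1]`). -/
def bern (p : ℝ) : Measure Bool :=
  ENNReal.ofReal p • Measure.dirac true + ENNReal.ofReal (1 - p) • Measure.dirac false

/-- i.i.d. Bernoulli(p) edge indicators. -/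
def bernEdges (n : ℕ) (p : ℝ) : Measure (Edge n → Bool) :=
  Measure.pi fun _ => bern p

/-- The null model `Q_{n,p,s}` of the correlated Erdős–Rényi problem: two independent families of
i.i.d. Bernoulli(ps) edge indicators. -/
def QER (n : ℕ) (p s : ℝ) : Measure ((Edge n → Bool) × (Edge n → Bool)) :=
  (bernEdges n (p * s)).prod (bernEdges n (p * s))

/-- The planted model `P_{n,p,s}`: draw `π` uniformly, a parent graph `G` with i.i.d. Bernoulli(p)
edges, and independent subsampling families `U`, `V` of i.i.d. Bernoulli(s); output
`A_e = G_e · U_e` and `B` with `B_{π(e)} = G_e · V_e`, i.e.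
`B_f = G_{π⁻¹(f)} · V_{π⁻¹(f)}`. -/
def PER (n : ℕ) (p s : ℝ) : Measure ((Edge n → Bool) × (Edge n → Bool)) :=
  Measure.map
    (fun ω : Equiv.Perm (Fin n) × (Edge n → Bool) × (Edge n → Bool) × (Edge n → Bool) =>
      (fun e => ω.2.1 e && ω.2.2.1 e,
       fun f => ω.2.1 (edgeMap ω.1⁻¹ f) && ω.2.2.2 (edgeMap ω.1⁻¹ f)))
    ((permUniform n).prod ((bernEdges n p).prod ((bernEdges n s).prod (bernEdges n s))))

/-- Total variation distance: `sup` over measurable sets `S` of `|P(S) - Q(S)|`. -/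
def TV {Ω : Type*} [MeasurableSpace Ω] (P Q : Measure Ω) : ℝ :=
  ⨆ S : {S : Set Ω // MeasurableSet S}, |(P S.1).toReal - (Q S.1).toReal|

/-! ### Moment generating functions under the two models -/

/-- The indicator of `true`, turning edge indicators into real numbers. -/
def ind (b : Bool) : ℝ := if b then 1 else 0

/-- For `x = (A, B)`, the number of edges `e` of `A` whose image under `π` is an edge of `B`. -/
def overlap {n : ℕ} (π : Equiv.Perm (Fin n)) (x : (Edge n → Bool) × (Edge n → Bool)) : ℝ :=
  ∑ e, ind (x.1 e) * ind (x.2 (edgeMap π e))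

lemma isProb_bern {p : ℝ} (hp : p ∈ Set.Icc (0 : ℝ) 1) : IsProbabilityMeasure (bern p) := by
  constructor
  have h1 : (0 : ℝ) ≤ 1 - p := by linarith [hp.2]
  simp [bern, ← ENNReal.ofReal_add hp.1 h1]

lemma isProb_bernEdges {n : ℕ} {p : ℝ} (hp : p ∈ Set.Icc (0 : ℝ) 1) :
    IsProbabilityMeasure (bernEdges n p) := by
  have := isProb_bern hp
  unfold bernEdges
  infer_instance

lemma isProb_permUniform (n : ℕ) : IsProbabilityMeasure (permUniform n) := by
  unfold permUniform
  infer_instance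

lemma isProb_QER {n : ℕ} {p s : ℝ} (hps : p * s ∈ Set.Icc (0 : ℝ) 1) :
    IsProbabilityMeasure (QER n p s) := by
  have := isProb_bernEdges (n := n) hps
  unfold QER
  infer_instance

instance (n : ℕ) : DiscreteMeasurableSpace (Equiv.Perm (Fin n)) := ⟨fun _ => trivial⟩

lemma isProb_PER {n : ℕ} {p s : ℝ} (hp : p ∈ Set.Icc (0 : ℝ) 1) (hs : s ∈ Set.Icc (0 : ℝ) 1) :
    IsProbabilityMeasure (PER n p s) := by
  have := isProb_bernEdges (n := n) hp
  have := isProb_bernEdges (n := n) hs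
  have := isProb_permUniform n
  unfold PER
  exact Measure.isProbabilityMeasure_map (Measurable.of_discrete.aemeasurable)

lemma integral_bern {p : ℝ} (hp : p ∈ Set.Icc (0 : ℝ) 1) (f : Bool → ℝ) :
    ∫ x, f x ∂(bern p) = p * f true + (1 - p) * f false := by
  have h1 : (0 : ℝ) ≤ 1 - p := by linarith [hp.2]
  have := isProb_bern hp
  unfold bern
  rw [integral_add_measure
    (Integrable.smul_measure (Integrable.of_finite (μ := .dirac true)) ENNReal.ofReal_ne_top)
    (Integrable.smul_measure (Integrable.of_finite (μ := .dirac false)) ENNReal.ofReal_ne_top)]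
  simp [integral_smul_measure, hp.1, h1]

lemma integral_bernEdges_prod {n : ℕ} {p : ℝ} (hp : p ∈ Set.Icc (0 : ℝ) 1)
    (f : Edge n → Bool → ℝ) :
    ∫ x, ∏ e, f e (x e) ∂(bernEdges n p) = ∏ e, (p * f e true + (1 - p) * f e false) := by
  have := isProb_bern hp
  unfold bernEdges
  rw [integral_fintype_prod_eq_prod]
  simp only [integral_bern hp]

lemma edgeMap_bijective {n : ℕ} (π : Equiv.Perm (Fin n)) :
    Function.Bijective (edgeMap π) := by
  refine (Finite.injective_iff_bijective).mp fun a b hab => ?_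
  apply Subtype.ext
  exact Sym2.map.injective π.injective (congrArg Subtype.val hab)

lemma edgeMap_inv {n : ℕ} (π : Equiv.Perm (Fin n)) (e : Edge n) :
    edgeMap π⁻¹ (edgeMap π e) = e := by
  apply Subtype.ext
  simp [edgeMap, Sym2.map_map]

/-- Under the null model the overlap at a fixed permutation is Binomial with success probability
`(p * s) ^ 2`. -/
lemma mgf_overlap_QER {n : ℕ} {p s : ℝ} (hps : p * s ∈ Set.Icc (0 : ℝ) 1)
    (π : Equiv.Perm (Fin n)) (t : ℝ) :
    mgf (overlap π) (QER n p s) t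
      = (1 + (p * s) ^ 2 * (Real.exp t - 1)) ^ (Fintype.card (Edge n)) := by
  have := isProb_bernEdges (n := n) hps
  unfold mgf QER
  rw [integral_prod_symm _ Integrable.of_finite]
  have h1 : ∀ B : Edge n → Bool,
      ∫ A, Real.exp (t * overlap π (A, B)) ∂(bernEdges n (p * s))
        = ∏ f, (p * s * Real.exp (t * ind (B f)) + (1 - p * s)) := by
    intro B
    have : ∀ A : Edge n → Bool, Real.exp (t * overlap π (A, B))
        = ∏ e, Real.exp (t * (ind (A e) * ind (B (edgeMap π e)))) := by
      intro A
      simp [overlap, Finset.mul_sum, Real.exp_sum]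
    simp_rw [this]
    rw [integral_bernEdges_prod hps (fun e a => Real.exp (t * (ind a * ind (B (edgeMap π e))))),
      ← (edgeMap_bijective π).prod_comp (fun f => p * s * Real.exp (t * ind (B f)) + (1 - p * s))]
    simp [ind]
  simp_rw [h1]
  rw [integral_bernEdges_prod hps
    (fun _ b => p * s * Real.exp (t * ind b) + (1 - p * s))]
  simp only [Finset.prod_const, Finset.card_univ]
  congr 1
  simp [ind]
  ring

/-- For `x = (G, U, V)`, the number of edges of the parent graph `G` kept by both subsamplings
`U` and `V`; this is the overlap at the true permutation in the planted model. -/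
def kept {n : ℕ} (x : (Edge n → Bool) × (Edge n → Bool) × (Edge n → Bool)) : ℝ :=
  ∑ e, ind (x.1 e) * (ind (x.2.1 e) * ind (x.2.2 e))

/-- `kept` is Binomial with success probability `p * s ^ 2`. -/
lemma mgf_kept {n : ℕ} {p s : ℝ} (hp : p ∈ Set.Icc (0 : ℝ) 1) (hs : s ∈ Set.Icc (0 : ℝ) 1)
    (t : ℝ) :
    mgf (kept (n := n))
        ((bernEdges n p).prod ((bernEdges n s).prod (bernEdges n s))) t
      = (1 + p * s ^ 2 * (Real.exp t - 1)) ^ (Fintype.card (Edge n)) := by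
  have := isProb_bernEdges (n := n) hp
  have := isProb_bernEdges (n := n) hs
  unfold mgf
  rw [integral_prod _ Integrable.of_finite]
  have h1 : ∀ G : Edge n → Bool,
      ∫ y, Real.exp (t * kept (G, y)) ∂((bernEdges n s).prod (bernEdges n s))
        = ∏ e, (1 + s ^ 2 * (Real.exp (t * ind (G e)) - 1)) := by
    intro G
    rw [integral_prod _ Integrable.of_finite]
    have h2 : ∀ U : Edge n → Bool,
        ∫ V, Real.exp (t * kept (G, U, V)) ∂(bernEdges n s)
          = ∏ e, (1 + s * (Real.exp (t * (ind (G e) * ind (U e))) - 1)) := by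
      intro U
      have : ∀ V : Edge n → Bool, Real.exp (t * kept (G, U, V))
          = ∏ e, Real.exp (t * (ind (G e) * (ind (U e) * ind (V e)))) := by
        intro V
        simp [kept, Finset.mul_sum, Real.exp_sum]
      simp_rw [this]
      rw [integral_bernEdges_prod hs
        (fun e v => Real.exp (t * (ind (G e) * (ind (U e) * ind v))))]
      refine Finset.prod_congr rfl fun e _ => ?_
      simp [ind]
      ring
    simp_rw [h2]
    rw [integral_bernEdges_prod hs
      (fun e u => 1 + s * (Real.exp (t * (ind (G e) * ind u)) - 1))]
    refine Finset.prod_congr rfl fun e _ => ?_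
    simp [ind]
    ring
  simp_rw [h1]
  rw [integral_bernEdges_prod hp (fun _ g => 1 + s ^ 2 * (Real.exp (t * ind g) - 1))]
  simp only [Finset.prod_const, Finset.card_univ]
  congr 1
  simp [ind]
  ring

/-! ### Error probabilities of the maximal-overlap test -/

/-- The rejection region of the test: some permutation has overlap at least `τ`. -/
def rejectSet (n : ℕ) (τ : ℝ) : Set ((Edge n → Bool) × (Edge n → Bool)) :=
  {x | ∃ π, τ ≤ overlap π x}

lemma one_add_pow_le_exp {x : ℝ} (hx : -1 ≤ x) (N : ℕ) : (1 + x) ^ N ≤ Real.exp (N * x) := by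
  rw [Real.exp_nat_mul]
  exact pow_le_pow_left₀ (by linarith) (by linarith [Real.add_one_le_exp x]) N

/-- First-moment (union) bound for false alarms, with the Chernoff parameter `t`. -/
lemma QER_rejectSet_le {n : ℕ} {p s : ℝ} (hps : p * s ∈ Set.Icc (0 : ℝ) 1) (τ : ℝ) {t : ℝ}
    (ht : 0 ≤ t) :
    (QER n p s).real (rejectSet n τ) ≤
      n.factorial * Real.exp (Fintype.card (Edge n) * ((p * s) ^ 2 * (Real.exp t - 1)) - t * τ) := by
  have := isProb_QER (n := n) hps
  have hU : rejectSet n τ = ⋃ π : Equiv.Perm (Fin n), {x | τ ≤ overlap π x} := by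
    ext x; simp [rejectSet]
  rw [hU]
  refine (measureReal_iUnion_fintype_le _).trans ?_
  have hb : ∀ π : Equiv.Perm (Fin n), (QER n p s).real {x | τ ≤ overlap π x} ≤
      Real.exp (Fintype.card (Edge n) * ((p * s) ^ 2 * (Real.exp t - 1)) - t * τ) := by
    intro π
    refine (measure_ge_le_exp_mul_mgf τ ht Integrable.of_finite).trans ?_
    rw [mgf_overlap_QER hps, sub_eq_neg_add _ (t * τ), Real.exp_add, ← neg_mul]
    have h0 : 0 ≤ (p * s) ^ 2 * (Real.exp t - 1) :=
      mul_nonneg (sq_nonneg _) (by linarith [Real.add_one_le_exp t])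
    gcongr
    exact one_add_pow_le_exp (by linarith) _
  refine (Finset.sum_le_sum fun π _ => hb π).trans ?_
  simp [Fintype.card_perm]

/-- The overlap at the true permutation equals `kept`, so the test misses only on the lower tail of
`kept`, which the Chernoff bound with parameter `-t` controls. -/
lemma PER_rejectSet_ge {n : ℕ} {p s : ℝ} (hp : p ∈ Set.Icc (0 : ℝ) 1)
    (hs : s ∈ Set.Icc (0 : ℝ) 1) (τ : ℝ) {t : ℝ} (ht : 0 ≤ t) :
    1 - Real.exp (Fintype.card (Edge n) * (p * s ^ 2 * (Real.exp (-t) - 1)) + t * τ) ≤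
      (PER n p s).real (rejectSet n τ) := by
  have := isProb_bernEdges (n := n) hp
  have := isProb_bernEdges (n := n) hs
  have := isProb_permUniform n
  have := isProb_PER (n := n) hp hs
  set ν := (bernEdges n p).prod ((bernEdges n s).prod (bernEdges n s)) with hν
  have hlow : ν.real {x | kept x ≤ τ} ≤
      Real.exp (Fintype.card (Edge n) * (p * s ^ 2 * (Real.exp (-t) - 1)) + t * τ) := by
    refine (measure_le_le_exp_mul_mgf τ (neg_nonpos.mpr ht) Integrable.of_finite).trans ?_
    rw [mgf_kept hp hs, add_comm (_ * _) (t * τ), Real.exp_add, neg_neg]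
    have h0 : -1 ≤ p * s ^ 2 * (Real.exp (-t) - 1) := by
      have h1 : 0 ≤ p * s ^ 2 := mul_nonneg hp.1 (sq_nonneg _)
      have h2 : p * s ^ 2 ≤ 1 :=
        mul_le_one₀ hp.2 (sq_nonneg _) (pow_le_one₀ hs.1 hs.2)
      nlinarith [Real.exp_pos (-t)]
    gcongr
    exact one_add_pow_le_exp h0 _
  have hc : (PER n p s).real (rejectSet n τ)ᶜ ≤ ν.real {x | kept x ≤ τ} := by
    unfold PER
    rw [map_measureReal_apply Measurable.of_discrete MeasurableSet.of_discrete]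
    have : ν.real {x | kept x ≤ τ} =
        ((permUniform n).prod ν).real (Set.univ ×ˢ {x | kept x ≤ τ}) := by
      rw [measureReal_prod_prod]; simp
    rw [this]
    refine measureReal_mono ?_
    rintro ⟨π, G, U, V⟩ hx
    refine ⟨trivial, ?_⟩
    by_contra hk
    refine hx ⟨π, ?_⟩
    have hk' : τ < kept (G, U, V) := not_le.mp hk
    refine hk'.le.trans (le_of_eq ?_)
    simp only [kept, overlap, edgeMap_inv]
    refine Finset.sum_congr rfl fun e _ => ?_
    cases G e <;> cases U e <;> cases V e <;> simp [ind]
  have := probReal_compl_eq_one_sub (μ := PER n p s) (s := rejectSet n τ) MeasurableSet.of_discrete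
  linarith

lemma TV_le_one {Ω : Type*} [MeasurableSpace Ω] (P Q : Measure Ω) [IsProbabilityMeasure P]
    [IsProbabilityMeasure Q] : TV P Q ≤ 1 := by
  refine Real.iSup_le (fun S => ?_) zero_le_one
  have h1 : P.real S.1 ≤ 1 := measureReal_le_one
  have h2 : Q.real S.1 ≤ 1 := measureReal_le_one
  have h3 : 0 ≤ P.real S.1 := measureReal_nonneg
  have h4 : 0 ≤ Q.real S.1 := measureReal_nonneg
  change |P.real S.1 - Q.real S.1| ≤ 1
  rw [abs_le]; constructor <;> linarith

lemma sub_le_TV {Ω : Type*} [MeasurableSpace Ω] (P Q : Measure Ω) [IsProbabilityMeasure P]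
    [IsProbabilityMeasure Q] {S : Set Ω} (hS : MeasurableSet S) : P.real S - Q.real S ≤ TV P Q := by
  refine (le_abs_self _).trans ?_
  refine le_ciSup (f := fun S : {S : Set Ω // MeasurableSet S} =>
    |(P S.1).toReal - (Q S.1).toReal|) ⟨1, ?_⟩ ⟨S, hS⟩
  rintro _ ⟨S, rfl⟩
  have h1 : P.real S.1 ≤ 1 := measureReal_le_one
  have h2 : Q.real S.1 ≤ 1 := measureReal_le_one
  have h3 : 0 ≤ P.real S.1 := measureReal_nonneg
  have h4 : 0 ≤ Q.real S.1 := measureReal_nonneg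
  change |P.real S.1 - Q.real S.1| ≤ 1
  rw [abs_le]; constructor <;> linarith

lemma card_edge (n : ℕ) : (Fintype.card (Edge n) : ℝ) = n * (n - 1) / 2 := by
  rw [Sym2.card_subtype_not_diag, Fintype.card_fin, Nat.cast_choose_two]

/-! ### The exponent and the test -/

/-- Here `L` stands for `log (1 / p)` and `ℓ` for `log n`. The exponent `L - 1 + p` is at least
`L ^ 2 / 4` for `L ≤ 2` and at least `L / 2` for `L ≥ 2`; both cases are covered by this bound. -/
lemma sq_le_mul_exponent {L ℓ : ℝ} (hL : 0 ≤ L) (hℓ : 1 ≤ ℓ) (hLℓ : L ≤ 2 * ℓ) :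
    L ^ 2 ≤ 4 * ℓ * (L - 1 + Real.exp (-L)) := by
  rcases le_total L 2 with h2 | h2
  · have h1 : 1 - L / 2 ≤ Real.exp (-(L / 2)) := by linarith [Real.add_one_le_exp (-(L / 2))]
    have h3 : Real.exp (-L) = Real.exp (-(L / 2)) ^ 2 := by
      rw [← Real.exp_nat_mul]; congr 1; push_cast; ring
    have h4 : (1 - L / 2) ^ 2 ≤ Real.exp (-(L / 2)) ^ 2 :=
      pow_le_pow_left₀ (by linarith) h1 2
    have h5 : L ^ 2 ≤ 4 * (L - 1 + Real.exp (-L)) := by rw [h3]; nlinarith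
    nlinarith [sq_nonneg L]
  · have h1 : L / 2 ≤ L - 1 + Real.exp (-L) := by linarith [Real.exp_pos (-L)]
    have h2 : 4 * ℓ * (L / 2) ≤ 4 * ℓ * (L - 1 + Real.exp (-L)) := by gcongr
    nlinarith

/-- With `L = log (1 / p)`: the hypothesis, which follows from the threshold condition and `s ≤ 1`,
forces `p ≥ n⁻²`. -/
lemma log_inv_le {n : ℝ} {L : ℝ} (hn : 0 < n) (hlog : 1 ≤ Real.log n)
    (h : 2 * Real.log n ≤ n * Real.exp (-L) * L) : L ≤ 2 * Real.log n := by
  have h1 : L ≤ 2 * Real.exp (L / 2) := by linarith [Real.add_one_le_exp (L / 2)]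
  have h2 : Real.exp (-L) * Real.exp (L / 2) = Real.exp (-(L / 2)) := by
    rw [← Real.exp_add]; congr 1; ring
  have h3 : n * Real.exp (-L) * L ≤ n * Real.exp (-L) * (2 * Real.exp (L / 2)) := by gcongr
  have h4 : 1 ≤ n * Real.exp (-(L / 2)) := by
    rw [← h2]; linarith
  have h5 : Real.exp (L / 2) ≤ n := by
    have := mul_le_mul_of_nonneg_right h4 (Real.exp_pos (L / 2)).le
    rwa [one_mul, mul_assoc, ← Real.exp_add, neg_add_cancel, Real.exp_zero, mul_one] at this
  have := (Real.le_log_iff_exp_le hn).mpr h5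
  linarith

/-- The non-asymptotic form of the theorem: the subtracted terms bound the missed-detection and
false-alarm probabilities of the maximal-overlap test. -/
lemma TV_lower_bound {n : ℕ} {p s : ℝ} (hp : p ∈ Set.Ioo (0 : ℝ) 1) (hs : s ∈ Set.Icc (0 : ℝ) 1)
    (hlog : 1 ≤ Real.log n)
    (h : 2 * Real.log n / (((n : ℝ) - 1) * p * (Real.log (1 / p) - 1 + p)) ≤ s ^ 2) :
    1 - Real.exp (-(n / (64 * Real.log n ^ 2)))
      - n.factorial * Real.exp (n / 2 - n * Real.log n) ≤ TV (PER n p s) (QER n p s) := by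
  obtain ⟨hp0, hp1⟩ := hp
  have hpI : p ∈ Set.Icc (0 : ℝ) 1 := ⟨hp0.le, hp1.le⟩
  have hpsI : p * s ∈ Set.Icc (0 : ℝ) 1 :=
    ⟨mul_nonneg hp0.le hs.1, mul_le_one₀ hp1.le hs.1 hs.2⟩
  have := isProb_PER (n := n) hpI hs
  have := isProb_QER (n := n) hpsI
  set ℓ := Real.log n with hℓ
  set L := Real.log (1 / p) with hLdef
  have hLlog : L = -Real.log p := by rw [hLdef, one_div, Real.log_inv]
  have hexpL : Real.exp (-L) = p := by rw [hLlog, neg_neg, Real.exp_log hp0]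
  have hexpL' : Real.exp L = p⁻¹ := by rw [hLlog, Real.exp_neg, Real.exp_log hp0]
  have hL0 : 0 < L := by rw [hLlog]; linarith [Real.log_neg hp0 hp1]
  set g := L - 1 + p with hg
  have hg0 : 0 < g := by
    have := Real.log_lt_sub_one_of_pos hp0 hp1.ne
    rw [hg, hLlog]; linarith
  have hgL : g ≤ L := by linarith
  have hn1 : (1 : ℝ) < n := by
    by_contra hcon
    have := Real.log_nonpos (Nat.cast_nonneg n) (not_lt.mp hcon)
    linarith
  have hD : 0 < ((n : ℝ) - 1) * p * g := by
    have : 0 < (n : ℝ) - 1 := by linarith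
    positivity
  rw [div_le_iff₀ hD] at h
  -- `m` is the mean number of common edges at the true permutation
  set m : ℝ := n * (n - 1) / 2 * (p * s ^ 2) with hm
  have hm0 : 0 ≤ m := by
    have : 0 < (n : ℝ) - 1 := by linarith
    have := hp0.le
    positivity
  have hmg : n * ℓ ≤ m * g := by
    have : m * g = n / 2 * (s ^ 2 * ((n - 1) * p * g)) := by rw [hm]; ring
    rw [this]
    have : (n : ℝ) / 2 * (2 * ℓ) ≤ n / 2 * (s ^ 2 * ((n - 1) * p * g)) := by gcongr
    linarith
  have hLℓ : L ≤ 2 * ℓ := by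
    refine log_inv_le (by linarith) hlog ?_
    rw [hexpL]
    have h1 : s ^ 2 * ((n - 1) * p * g) ≤ 1 * ((n - 1) * p * g) :=
      mul_le_mul_of_nonneg_right (pow_le_one₀ hs.1 hs.2) hD.le
    have h2 : ((n : ℝ) - 1) * p * g ≤ n * p * L := by
      have : (n : ℝ) - 1 ≤ n := by linarith
      gcongr
    linarith
  have hsq : L ^ 2 ≤ 4 * ℓ * g := by
    have := sq_le_mul_exponent hL0.le hlog hLℓ
    rwa [hexpL] at this
  -- the relative slack `δ` below the mean: `δ * L = g / (2 * ℓ)` costs only `n / 2` in the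
  -- exponent under the null model
  set δ : ℝ := g / (2 * ℓ * L) with hδ
  have hℓ0 : 0 < ℓ := by linarith
  have hδ0 : 0 < δ := by positivity
  have hδ1 : δ ≤ 1 := by
    rw [hδ, div_le_one (by positivity)]
    nlinarith
  have hδL : L * δ = g / (2 * ℓ) := by rw [hδ]; field_simp
  have hmδ : n / (16 * ℓ ^ 2) ≤ m * δ ^ 2 := by
    have h1 : m * δ ^ 2 = (m * g) * (g / L ^ 2) / (4 * ℓ ^ 2) := by rw [hδ]; field_simp; ring
    have h2 : 1 / (4 * ℓ) ≤ g / L ^ 2 := by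
      rw [div_le_div_iff₀ (by positivity) (by positivity)]
      linarith
    have h3 : (n * ℓ) * (1 / (4 * ℓ)) ≤ (m * g) * (g / L ^ 2) := by gcongr
    rw [h1]
    calc (n : ℝ) / (16 * ℓ ^ 2) = (n * ℓ) * (1 / (4 * ℓ)) / (4 * ℓ ^ 2) := by field_simp; norm_num
      _ ≤ _ := by gcongr
  set τ : ℝ := (1 - δ) * m with hτ
  have hcard := card_edge n
  have hP := PER_rejectSet_ge (n := n) hpI hs τ (t := δ / 2) (by positivity)
  have hQ := QER_rejectSet_le (n := n) hpsI τ (t := L) hL0.le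
  have hTV := sub_le_TV (PER n p s) (QER n p s) (S := rejectSet n τ) MeasurableSet.of_discrete
  rw [hcard] at hP hQ
  have hP' : Real.exp (n * (n - 1) / 2 * (p * s ^ 2 * (Real.exp (-(δ / 2)) - 1)) + δ / 2 * τ) ≤
      Real.exp (-(n / (64 * ℓ ^ 2))) := by
    apply Real.exp_le_exp.mpr
    have h1 : Real.exp (-(δ / 2)) - 1 ≤ -(δ / 2) + (δ / 2) ^ 2 := by
      have := (abs_le.mp (Real.abs_exp_sub_one_sub_id_le (x := -(δ / 2))
        (by rw [abs_neg, abs_of_pos (by positivity)]; linarith))).2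
      rw [neg_sq] at this
      linarith
    have h2 : (n : ℝ) * (n - 1) / 2 * (p * s ^ 2 * (Real.exp (-(δ / 2)) - 1)) + δ / 2 * τ
        = m * (Real.exp (-(δ / 2)) - 1) + δ / 2 * ((1 - δ) * m) := by rw [hm, hτ]; ring
    have h3 := mul_le_mul_of_nonneg_left h1 hm0
    have h4 : (n : ℝ) / (64 * ℓ ^ 2) = n / (16 * ℓ ^ 2) / 4 := by field_simp; norm_num
    have h5 : m * (-(δ / 2) + (δ / 2) ^ 2) + δ / 2 * ((1 - δ) * m) = -(m * δ ^ 2 / 4) := by ring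
    rw [h2, h4]
    linarith
  have hQ' : Real.exp (n * (n - 1) / 2 * ((p * s) ^ 2 * (Real.exp L - 1)) - L * τ) ≤
      Real.exp (n / 2 - n * ℓ) := by
    apply Real.exp_le_exp.mpr
    -- the choice `exp L = 1 / p` is the optimal Chernoff parameter at the level `m`
    have h1 : (n : ℝ) * (n - 1) / 2 * ((p * s) ^ 2 * (Real.exp L - 1)) - L * τ
        = -(m * g) * (1 - 1 / (2 * ℓ)) := by
      have e1 : (p * s) ^ 2 * (Real.exp L - 1) = p * s ^ 2 * (1 - p) := by
        rw [hexpL']; field_simp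
      have e2 : L * τ = L * m - (L * δ) * m := by rw [hτ]; ring
      rw [e1, e2, hδL]
      have e3 : (n : ℝ) * (n - 1) / 2 * (p * s ^ 2 * (1 - p)) = m * (1 - p) := by rw [hm]; ring
      rw [e3, hg]
      field_simp
      ring
    have h2 : 0 ≤ 1 - 1 / (2 * ℓ) := by
      rw [sub_nonneg, div_le_one (by positivity)]; linarith
    have h3 := mul_le_mul_of_nonneg_right hmg h2
    have h4 : (n : ℝ) * ℓ * (1 - 1 / (2 * ℓ)) = n * ℓ - n / 2 := by field_simp
    rw [h1]
    linarith
  have hQ'' := mul_le_mul_of_nonneg_left hQ' (Nat.cast_nonneg (α := ℝ) n.factorial)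
  linarith

/-! ### Limits of the error terms -/

lemma two_mul_self_pow_le_succ_pow (n : ℕ) (hn : 1 ≤ n) :
    2 * (n : ℝ) ^ n ≤ ((n : ℝ) + 1) ^ n := by
  have hn0 : (0 : ℝ) < n := by exact_mod_cast hn
  have h := one_add_mul_le_pow (a := 1 / (n : ℝ)) (by have : 0 ≤ 1 / (n : ℝ) := by positivity
                                                      linarith) n
  have h1 : (1 : ℝ) + n * (1 / n) = 2 := by field_simp; norm_num
  have h2 : ((n : ℝ) + 1) ^ n = n ^ n * (1 + 1 / n) ^ n := by
    rw [← mul_pow]; congr 1; field_simp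
  rw [h2]
  rw [h1] at h
  nlinarith [pow_pos hn0 n]

/-- A weak Stirling bound, enough because the exponent leaves a factor `exp (n / 2) < 2 ^ n`. -/
lemma factorial_le_two_mul_div_pow (n : ℕ) (hn : 1 ≤ n) :
    (n.factorial : ℝ) ≤ 2 * ((n : ℝ) / 2) ^ n := by
  induction n, hn using Nat.le_induction with
  | base => norm_num
  | succ n hn ih =>
    have h := two_mul_self_pow_le_succ_pow n hn
    rw [Nat.factorial_succ]
    push_cast
    rw [div_pow] at ih ⊢
    calc ((n : ℝ) + 1) * n.factorial ≤ (n + 1) * (2 * (n ^ n / 2 ^ n)) := by gcongr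
      _ = (n + 1) * (2 * n ^ n) / 2 ^ n := by ring
      _ ≤ (n + 1) * (n + 1) ^ n / 2 ^ n := by gcongr
      _ = 2 * ((n + 1) ^ (n + 1) / 2 ^ (n + 1)) := by rw [pow_succ, pow_succ]; field_simp

lemma tendsto_factorial_mul_exp :
    Tendsto (fun n : ℕ => (n.factorial : ℝ) * Real.exp (n / 2 - n * Real.log n)) atTop (nhds 0) := by
  have hr : Real.exp (1 / 2) / 2 < 1 := by
    rw [div_lt_one two_pos]
    have h1 : Real.exp (1 / 2) ^ 2 = Real.exp 1 := by rw [← Real.exp_nat_mul]; norm_num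
    have := Real.exp_one_lt_d9
    nlinarith [Real.exp_pos (1 / 2)]
  have hlim := (tendsto_pow_atTop_nhds_zero_of_lt_one (by positivity) hr).const_mul 2
  rw [mul_zero] at hlim
  refine squeeze_zero' (.of_forall fun n => by positivity) ?_ hlim
  filter_upwards [eventually_ge_atTop 1] with n hn
  have hn0 : (0 : ℝ) < n := by exact_mod_cast hn
  have h1 : Real.exp (n / 2 - n * Real.log n) = Real.exp (1 / 2) ^ n / (n : ℝ) ^ n := by
    rw [Real.exp_sub, ← Real.exp_nat_mul, Real.exp_nat_mul _ n, Real.exp_log hn0]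
    congr 2; ring
  rw [h1]
  refine (mul_le_mul_of_nonneg_right (factorial_le_two_mul_div_pow n hn) (by positivity)).trans
    (le_of_eq ?_)
  rw [div_pow, div_pow]
  field_simp

lemma tendsto_exp_neg_div_log_sq :
    Tendsto (fun n : ℕ => Real.exp (-((n : ℝ) / (64 * Real.log n ^ 2)))) atTop (nhds 0) := by
  refine Real.tendsto_exp_neg_atTop_nhds_zero.comp ?_
  have h1 : Tendsto (fun x : ℝ => Real.log x ^ 2 / (1 / 64 * x + 0)) atTop
      (nhdsWithin 0 (Set.Ioi 0)) := by
    refine tendsto_nhdsWithin_iff.mpr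
      ⟨Real.tendsto_pow_log_div_mul_add_atTop (1 / 64) 0 2 (by norm_num), ?_⟩
    filter_upwards [eventually_gt_atTop 1] with x hx
    have := Real.log_pos hx
    have : 0 < x := by linarith
    simp only [Set.mem_Ioi]
    positivity
  refine (h1.inv_tendsto_nhdsGT_zero.comp tendsto_natCast_atTop_atTop).congr fun n => ?_
  simp
  ring

/-- Theorem 2 of the paper, positive part: in the correlated Erdős–Rényi
detection problem, if `s_n² ≥ 2 log n / ((n-1) p_n (log(1/p_n) - 1 + p_n))` for all sufficiently
large `n`, then `TV(P_{n,p_n,s_n}, Q_{n,p_n,s_n}) → 1`, i.e. strong detection is possible. -/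
theorem stmt2 (p s : ℕ → ℝ) (hp : ∀ n, p n ∈ Set.Ioo (0 : ℝ) 1)
    (hs : ∀ n, s n ∈ Set.Icc (0 : ℝ) 1)
    (h : ∀ᶠ n : ℕ in atTop,
      2 * Real.log n / (((n : ℝ) - 1) * p n * (Real.log (1 / p n) - 1 + p n)) ≤ (s n) ^ 2) :
    Tendsto (fun n => TV (PER n (p n) (s n)) (QER n (p n) (s n))) atTop (nhds 1) := by
  have hev : ∀ᶠ n : ℕ in atTop, 1 ≤ Real.log n :=
    (Real.tendsto_log_atTop.comp tendsto_natCast_atTop_atTop).eventually_ge_atTop 1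
  have hlow := (tendsto_const_nhds (x := (1 : ℝ))).sub tendsto_exp_neg_div_log_sq |>.sub
    tendsto_factorial_mul_exp
  rw [sub_zero, sub_zero] at hlow
  refine tendsto_of_tendsto_of_tendsto_of_le_of_le' hlow tendsto_const_nhds ?_ ?_
  · filter_upwards [hev, h] with n hn1 hn2
    exact TV_lower_bound (hp n) (hs n) hn1 hn2
  · refine .of_forall fun n => ?_
    have hpI : p n ∈ Set.Icc (0 : ℝ) 1 := ⟨(hp n).1.le, (hp n).2.le⟩
    have := isProb_PER (n := n) hpI (hs n)
    have := isProb_QER (n := n) (p := p n) (s := s n)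
      ⟨mul_nonneg hpI.1 (hs n).1, mul_le_one₀ hpI.2 (hs n).1 (hs n).2⟩
    exact TV_le_one _ _

end
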